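/- (Dictatorship under Pareto efficiency.) Suppose |A| ≥ 3 and the type domain 𝒰 = ∏_{i=1}^n U_i satisfies: (C1) for each agent i, U_i contains an unrestricted parallel domain, and (C2') there exists an agent i with a type in U_i that is not parallel. Then every social choice mechanism on 𝒰 that is DSIC, deterministic, IR, satisfies no subsidy, and is Pareto efficient is a dictatorship: there exists an agent i* such that for every u ∈ 𝒰, x(u) ∈ argmax_{a∈A} u_{i*,a}(0) and t_{i*}(u) = 0. -/

import Mathlib

/-!
Common framework: agents indexed by `I`, alternatives `A` (finite, nonempty).
A type of an agent is a family `u : A → ℝ → ℝ`, where `u a z` is the utility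
when alternative `a` is selected and the agent pays `z`.
-/

noncomputable section

namespace NQLSC

/-- A type (utility family) of an agent. -/
abbrev Util (A : Type*) := A → ℝ → ℝ

variable {A I : Type*}

/-- (S1): each `u a` is continuous and strictly decreasing in the payment. -/
def S1 (u : Util A) : Prop := ∀ a, Continuous (u a) ∧ StrictAnti (u a)

/-- `min_{a'∈A} u_{a'}(0)`, the value of the worst alternative at zero payment. -/
def minVal [Fintype A] [Nonempty A] (u : Util A) : ℝ :=
  Finset.univ.inf' Finset.univ_nonempty (fun a => u a 0)

/-- (S2): as the payment tends to `+∞`, the utility of every alternative drops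
(strictly) below `min_{a'} u_{a'}(0)`; for strictly decreasing utilities this is
equivalent to the utility being below that value at some payment. -/
def S2 [Fintype A] [Nonempty A] (u : Util A) : Prop :=
  ∀ a, ∃ z : ℝ, u a z < minVal u

/-- The willingness to pay `p_a = u_a⁻¹(min_{a'} u_{a'}(0))` (under (S1),(S2) this
`sInf` is the unique payment at which `u a` attains `minVal u`). -/
def wtp [Fintype A] [Nonempty A] (u : Util A) (a : A) : ℝ :=
  sInf {z : ℝ | u a z ≤ minVal u}

/-- A parallel type: (S1), (S2), and for all `a, b` with `v_a ≥ v_b` and all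
`z ∈ [0, p_b]`, `u_a (z + (p_a − p_b)) = u_b z`. -/
def IsParallel [Fintype A] [Nonempty A] (u : Util A) : Prop :=
  S1 u ∧ S2 u ∧ ∀ a b : A, u b 0 ≤ u a 0 → ∀ z : ℝ, 0 ≤ z → z ≤ wtp u b →
    u a (z + (wtp u a - wtp u b)) = u b z

/-- Unrestricted willingness to pay: every nonnegative vector with a zero entry is
the willingness-to-pay vector of some type in the domain. -/
def UnrestrictedWTP [Fintype A] [Nonempty A] (U : Set (Util A)) : Prop :=
  ∀ lam : A → ℝ, (∀ a, 0 ≤ lam a) → (∃ a, lam a = 0) →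
    ∃ u ∈ U, ∀ a, wtp u a = lam a

/-- Dominant-strategy incentive compatibility of a (deterministic) mechanism `(x,t)`
on the domain `𝒰 = ∏ i, U i`. -/
def DSIC [DecidableEq I] (U : I → Set (Util A)) (x : (I → Util A) → A)
    (t : (I → Util A) → I → ℝ) : Prop :=
  ∀ uh : I → Util A, (∀ j, uh j ∈ U j) → ∀ i, ∀ ui ∈ U i,
    ui (x uh) (t uh i) ≤
      ui (x (Function.update uh i ui)) (t (Function.update uh i ui) i)

/-- Individual rationality. -/
def IR [Fintype A] [Nonempty A] [DecidableEq I] (U : I → Set (Util A))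
    (x : (I → Util A) → A) (t : (I → Util A) → I → ℝ) : Prop :=
  ∀ uh : I → Util A, (∀ j, uh j ∈ U j) → ∀ i, ∀ ui ∈ U i,
    minVal ui ≤ ui (x (Function.update uh i ui)) (t (Function.update uh i ui) i)

/-- No subsidy: the mechanism never makes positive transfers to an agent. -/
def NoSubsidy (U : I → Set (Util A)) (t : (I → Util A) → I → ℝ) : Prop :=
  ∀ u : I → Util A, (∀ j, u j ∈ U j) → ∀ i, 0 ≤ t u i

/-- Ontoness of the choice rule on the given domain. -/
def OntoMech (U : I → Set (Util A)) (x : (I → Util A) → A) : Prop :=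
  ∀ a, ∃ u : I → Util A, (∀ j, u j ∈ U j) ∧ x u = a

/-- Pareto efficiency: at no profile can one select another alternative and adjust
payments so that all agents are weakly better off, some agent strictly better off, and
the total payment to the mechanism is not reduced. -/
def ParetoEfficient [Fintype I] (U : I → Set (Util A)) (x : (I → Util A) → A)
    (t : (I → Util A) → I → ℝ) : Prop :=
  ∀ u : I → Util A, (∀ j, u j ∈ U j) →
    ¬ ∃ (b : A) (s : I → ℝ), b ≠ x u ∧
      (∀ i, u i (x u) (t u i) ≤ u i b (s i)) ∧
      (∃ i, u i (x u) (t u i) < u i b (s i)) ∧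
      (∑ i, t u i) ≤ (∑ i, s i)

/-!
On parallel types, payments turn incentive compatibility into monotonicity in quasilinear values, so
by Roberts' theorem the mechanism maximizes a weighted sum of the agents' values. If two weights are
positive, then all are, since an agent without weight could otherwise compensate a paying agent for
a change of alternative. Another agent of positive weight can then confront any given agent with
arbitrary prices; her choices obey the law of demand at these prices, and this forces all her types
to be parallel. A type that is not parallel therefore leaves only one agent with positive weight,
and this agent obtains any alternative by bidding an arbitrarily small amount for it alone.
-/

section Cone

variable {K : Set (I → ℝ)} {α β : I → ℝ} {r c : ℝ}

/-- The sets of vectors that resemble `{α | 0 < k ⬝ᵥ α}` for nonnegative weights `k`. Totality is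
asked only up to a positive constant, so that the vectors on the boundary may be missing. -/
structure IsTotalCone (K : Set (I → ℝ)) : Prop where
  add_mem : ∀ α ∈ K, ∀ β ∈ K, α + β ∈ K
  mem_of_pos : ∀ α : I → ℝ, (∀ i, 0 < α i) → α ∈ K
  zero_notMem : (0 : I → ℝ) ∉ K
  smul_one_sub_mem : ∀ α ∉ K, ∀ δ : ℝ, 0 < δ → δ • (1 : I → ℝ) - α ∈ K

/-- The largest constant that can be subtracted from a vector within `K`; on a total cone this is
the linear functional whose positivity defines `K` up to the boundary. -/
def level (K : Set (I → ℝ)) (α : I → ℝ) : ℝ := sSup {r : ℝ | α - r • (1 : I → ℝ) ∈ K}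

namespace IsTotalCone

theorem le_of_sub_mem (hK : IsTotalCone K) (hr : α - r • (1 : I → ℝ) ∈ K)
    (hc : ∀ i, α i ≤ c) : r ≤ c := by
  by_contra! hlt
  have hpos : r • (1 : I → ℝ) - α ∈ K := hK.mem_of_pos _ fun i => by
    simpa using (hc i).trans_lt hlt
  exact hK.zero_notMem (by simpa using hK.add_mem _ hr _ hpos)

theorem sub_mem_of_lt (hK : IsTotalCone K) (hr : ∀ i, r < α i) : α - r • (1 : I → ℝ) ∈ K :=
  hK.mem_of_pos _ fun i => by simpa using hr i

variable [Finite I]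

theorem le_level (hK : IsTotalCone K) (hr : α - r • (1 : I → ℝ) ∈ K) : r ≤ level K α := by
  obtain ⟨c, hc⟩ := (Set.finite_range α).bddAbove
  exact le_csSup ⟨c, fun s hs => hK.le_of_sub_mem hs fun i => hc ⟨i, rfl⟩⟩ hr

theorem level_le (hK : IsTotalCone K) (h : ∀ r : ℝ, α - r • (1 : I → ℝ) ∈ K → r ≤ c) :
    level K α ≤ c := by
  obtain ⟨b, hb⟩ := (Set.finite_range α).bddBelow
  exact csSup_le ⟨b - 1, hK.sub_mem_of_lt fun i => by linarith [hb ⟨i, rfl⟩]⟩ h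

theorem le_level_of_forall_le (hK : IsTotalCone K) (hc : ∀ i, c ≤ α i) : c ≤ level K α :=
  le_of_forall_lt_imp_le_of_dense fun _ hr =>
    hK.le_level (hK.sub_mem_of_lt fun i => hr.trans_le (hc i))

theorem level_add_le (hK : IsTotalCone K) : level K α + level K β ≤ level K (α + β) := by
  have hβ : ∀ r : ℝ, α - r • (1 : I → ℝ) ∈ K → level K β ≤ level K (α + β) - r := by
    intro r hr
    refine hK.level_le fun s hs => ?_
    have hsum : α + β - (r + s) • (1 : I → ℝ) ∈ K := by
      convert hK.add_mem _ hr _ hs using 1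
      module
    linarith [hK.le_level hsum]
  have hα : level K α ≤ level K (α + β) - level K β :=
    hK.level_le fun r hr => by linarith [hβ r hr]
  linarith

theorem neg_level_le (hK : IsTotalCone K) : -level K α ≤ level K (-α) := by
  refine le_of_forall_lt_imp_le_of_dense fun s hs => ?_
  obtain ⟨r, hsr, hr⟩ := exists_between hs
  have hnot : α - (-r) • (1 : I → ℝ) ∉ K := fun h => by linarith [hK.le_level h]
  refine hK.le_level ?_
  convert hK.smul_one_sub_mem _ hnot (r - s) (by linarith) using 1
  module

theorem level_add (hK : IsTotalCone K) : level K (α + β) = level K α + level K β := by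
  refine le_antisymm ?_ hK.level_add_le
  have h := hK.level_add_le (α := α + β) (β := -β)
  rw [add_neg_cancel_right] at h
  linarith [hK.neg_level_le (α := β)]

end IsTotalCone

variable [Fintype I]

theorem exists_weights_of_additive (φ : (I → ℝ) →+ ℝ)
    (hφ : ∀ (α : I → ℝ) (c : ℝ), (∀ i, c ≤ α i) → c ≤ φ α) :
    ∃ k ∈ stdSimplex ℝ I, ∀ α, φ α = k ⬝ᵥ α := by
  classical
  have hφ' : ∀ (α : I → ℝ) (c : ℝ), (∀ i, α i ≤ c) → φ α ≤ c := fun α c h => by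
    have := hφ (-α) (-c) fun i => neg_le_neg (h i)
    rwa [map_neg, neg_le_neg_iff] at this
  have hbound : ∀ α, ‖φ α‖ ≤ 1 * ‖α‖ := fun α => by
    rw [one_mul, Real.norm_eq_abs, abs_le]
    exact ⟨hφ _ _ fun i => neg_le_of_abs_le (norm_le_pi_norm α i),
      hφ' _ _ fun i => le_of_abs_le (norm_le_pi_norm α i)⟩
  have hcont : Continuous φ := AddMonoidHomClass.continuous_of_bound φ 1 hbound
  have hdot : ∀ α, φ α = (fun i => φ (Pi.single i 1)) ⬝ᵥ α := fun α => by
    conv_lhs => rw [← Finset.univ_sum_single α, map_sum]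
    refine Finset.sum_congr rfl fun i _ => ?_
    rw [mul_comm, ← smul_eq_mul, ← map_real_smul φ hcont, ← Pi.single_smul', smul_eq_mul, mul_one]
  refine ⟨fun i => φ (Pi.single i 1), ⟨fun i => hφ _ _ fun j => ?_, ?_⟩, hdot⟩
  · exact (Pi.single_nonneg (α := fun _ : I => ℝ)).2 zero_le_one j
  · rw [← dotProduct_one, ← hdot]
    exact le_antisymm (hφ' _ _ fun _ => le_rfl) (hφ _ _ fun _ => le_rfl)

theorem IsTotalCone.exists_weights (hK : IsTotalCone K) :
    ∃ k ∈ stdSimplex ℝ I, ∀ α ∈ K, 0 ≤ k ⬝ᵥ α := by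
  obtain ⟨k, hk, hφ⟩ := exists_weights_of_additive
    (AddMonoidHom.mk' (level K) fun _ _ => hK.level_add) fun _ _ => hK.le_level_of_forall_le
  refine ⟨k, hk, fun α hα => ?_⟩
  rw [← hφ]
  exact hK.le_level (by simpa using hα)

end Cone

section Roberts

variable {G : (I → A → ℝ) → A} {v w : I → A → ℝ} {a b c d : A} {α β : I → ℝ}

/-- Roberts' positive association of differences: a choice rule on value profiles does not abandon
the chosen alternative when its advantage over each other alternative grows for all agents. -/
def PositiveAssociation (G : (I → A → ℝ) → A) : Prop :=
  ∀ v w : I → A → ℝ,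
    (∀ i b, b ≠ G v → v i (G v) - v i b < w i (G v) - w i b) → G w = G v

/-- The weak Pareto principle for choice rules on value profiles. -/
def WeakPareto (G : (I → A → ℝ) → A) : Prop :=
  ∀ (v : I → A → ℝ) (b : A), ∃ i, v i b ≤ v i (G v)

/-- The margins of `a` over `b` that lie, for each agent, strictly above the margin at some profile
where `a` is chosen. The slack makes these sets open, and hence independent of `a` and `b`. -/
def dominance (G : (I → A → ℝ) → A) (a b : A) : Set (I → ℝ) :=
  {α | ∃ v, G v = a ∧ ∀ i, v i a - v i b < α i}

theorem PositiveAssociation.of_update [Finite I] [DecidableEq I]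
    (h : ∀ (v : I → A → ℝ) (i : I) (w : A → ℝ),
      (∀ b, b ≠ G v → v i (G v) - v i b < w (G v) - w b) → G (Function.update v i w) = G v) :
    PositiveAssociation G := by
  intro v w hvw
  cases nonempty_fintype I
  have hpiecewise : ∀ s : Finset I, G (s.piecewise w v) = G v := by
    intro s
    induction s using Finset.induction_on with
    | empty => simp
    | insert j s hj ih =>
      rw [Finset.piecewise_insert, h, ih]
      intro b hb
      rw [ih] at hb ⊢
      rw [Finset.piecewise_eq_of_notMem _ _ _ hj]
      exact hvw j b hb
  simpa using hpiecewise Finset.univ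

theorem PositiveAssociation.ne_of_margin_lt (hG : PositiveAssociation G) (hb : b ≠ G v)
    (h : ∀ i, v i (G v) - v i b < w i (G v) - w i b) : G w ≠ b := by
  classical
  rintro rfl
  -- A profile between `v` and `w`, at which both choices would have to persist.
  choose m hvm hmw using fun i => exists_between (h i)
  let z : I → A → ℝ := fun i d => if d = G v then m i else if d = G w then 0 else
    min (m i - (v i (G v) - v i d)) (w i d - w i (G w)) - 1
  have hzv : G z = G v := hG v z fun i d hd => by
    rcases eq_or_ne d (G w) with rfl | hdw
    · simp only [z, hb, if_true, if_false]
      linarith [hvm i]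
    · simp only [z, hd, hdw, if_true, if_false]
      linarith [min_le_left (m i - (v i (G v) - v i d)) (w i d - w i (G w))]
  have hzw : G z = G w := hG w z fun i d hd => by
    rcases eq_or_ne d (G v) with rfl | hdv
    · simp only [z, hb, if_true, if_false]
      linarith [hmw i]
    · simp only [z, hd, hdv, hb, if_true, if_false]
      linarith [min_le_right (m i - (v i (G v) - v i d)) (w i d - w i (G w))]
  exact hb (hzw.symm.trans hzv)

theorem WeakPareto.ne_of_forall_lt (hP : WeakPareto G) (h : ∀ i, v i d < v i a) : G v ≠ d := by
  rintro rfl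
  obtain ⟨i, hi⟩ := hP v a
  exact hi.not_gt (h i)

theorem WeakPareto.exists_duel (hP : WeakPareto G) (hab : a ≠ b) (α : I → ℝ) :
    ∃ v, (G v = a ∨ G v = b) ∧ ∀ i, v i a - v i b = α i := by
  classical
  let v : I → A → ℝ := fun i d => if d = a then α i else if d = b then 0 else α i - 1
  refine ⟨v, ?_, fun i => by simp [v, hab.symm]⟩
  by_contra! hne
  exact hP.ne_of_forall_lt (v := v) (a := a) (fun i => by simp [v, hne.1, hne.2]) rfl

theorem WeakPareto.mem_dominance_of_pos (hP : WeakPareto G) (hab : a ≠ b) (hα : ∀ i, 0 < α i) :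
    α ∈ dominance G a b := by
  obtain ⟨v, hv, hmargin⟩ := hP.exists_duel hab fun i => α i / 2
  have hva : G v = a := hv.resolve_right <|
    hP.ne_of_forall_lt (a := a) fun i => by linarith [hα i, hmargin i]
  exact ⟨v, hva, fun i => by linarith [hα i, hmargin i]⟩

theorem WeakPareto.zero_notMem_dominance (hP : WeakPareto G) : (0 : I → ℝ) ∉ dominance G a b := by
  rintro ⟨v, hv, h⟩
  exact hP.ne_of_forall_lt (fun i => sub_neg.1 (h i)) hv

theorem WeakPareto.smul_one_sub_mem_dominance (hP : WeakPareto G) (hab : a ≠ b)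
    (hα : α ∉ dominance G a b) {δ : ℝ} (hδ : 0 < δ) :
    δ • (1 : I → ℝ) - α ∈ dominance G b a := by
  obtain ⟨v, hv, hmargin⟩ := hP.exists_duel hab fun i => α i - δ / 2
  have hvb : G v = b := hv.resolve_left fun hva =>
    hα ⟨v, hva, fun i => by linarith [hmargin i]⟩
  refine ⟨v, hvb, fun i => ?_⟩
  simp only [Pi.sub_apply, Pi.smul_apply, Pi.one_apply, smul_eq_mul, mul_one]
  linarith [hmargin i]

theorem exists_pos_sub_mem_dominance (hα : α ∈ dominance G a b) :
    ∃ β : I → ℝ, (∀ i, 0 < β i) ∧ α - β ∈ dominance G a b := by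
  obtain ⟨v, hv, h⟩ := hα
  refine ⟨fun i => (α i - (v i a - v i b)) / 2, fun i => ?_, v, hv, fun i => ?_⟩
  · linarith [h i]
  · simp only [Pi.sub_apply]
    linarith [h i]

theorem add_mem_dominance (hG : PositiveAssociation G) (hP : WeakPareto G) (hab : a ≠ b)
    (hbc : b ≠ c) (hac : a ≠ c) (hα : α ∈ dominance G a b) (hβ : β ∈ dominance G b c) :
    α + β ∈ dominance G a c := by
  classical
  obtain ⟨v, rfl, hv⟩ := hα
  obtain ⟨w, rfl, hw⟩ := hβ
  -- The margins at `z` exceed those at `v` and at `w`, but stay below `α` and `β`.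
  choose p hvp hpα using fun i => exists_between (hv i)
  choose q hwq hqβ using fun i => exists_between (hw i)
  let z : I → A → ℝ := fun i d => if d = G v then p i + q i else if d = G w then q i else
    if d = c then 0 else p i + q i - 1
  have hzv : ∀ i, z i (G v) = p i + q i := fun i => by simp [z]
  have hzw : ∀ i, z i (G w) = q i := fun i => by simp [z, hab.symm]
  have hzc : ∀ i, z i c = 0 := fun i => by simp [z, hac.symm, hbc.symm]
  have hne_w : G z ≠ G w := hG.ne_of_margin_lt hab.symm fun i => by
    rw [hzv, hzw]
    linarith [hvp i]
  have hne_c : G z ≠ c := hG.ne_of_margin_lt hbc.symm fun i => by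
    rw [hzw, hzc]
    linarith [hwq i]
  refine ⟨z, ?_, fun i => ?_⟩
  · by_contra hne_v
    exact hP.ne_of_forall_lt (v := z) (a := G v) (fun i => by simp [z, hne_v, hne_w, hne_c]) rfl
  · rw [hzv, hzc, Pi.add_apply]
    linarith [hpα i, hqβ i]

theorem dominance_subset_right (hG : PositiveAssociation G) (hP : WeakPareto G) (hab : a ≠ b)
    (hac : a ≠ c) : dominance G a b ⊆ dominance G a c := by
  intro α hα
  rcases eq_or_ne b c with rfl | hbc
  · exact hα
  · obtain ⟨β, hβ, hαβ⟩ := exists_pos_sub_mem_dominance hα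
    simpa using add_mem_dominance hG hP hab hbc hac hαβ (hP.mem_dominance_of_pos hbc hβ)

theorem dominance_subset_left (hG : PositiveAssociation G) (hP : WeakPareto G) (hab : a ≠ b)
    (hcb : c ≠ b) : dominance G a b ⊆ dominance G c b := by
  intro α hα
  rcases eq_or_ne c a with rfl | hca
  · exact hα
  · obtain ⟨β, hβ, hαβ⟩ := exists_pos_sub_mem_dominance hα
    simpa using add_mem_dominance hG hP hca hab hcb (hP.mem_dominance_of_pos hca hβ) hαβ

theorem dominance_subset (hA : 3 ≤ Cardinal.mk A) (hG : PositiveAssociation G)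
    (hP : WeakPareto G) (hab : a ≠ b) (hcd : c ≠ d) : dominance G a b ⊆ dominance G c d := by
  have of_ne : ∀ {a b c : A}, a ≠ b → c ≠ d → c ≠ b → dominance G a b ⊆ dominance G c d :=
    fun hab hcd hcb =>
      (dominance_subset_left hG hP hab hcb).trans (dominance_subset_right hG hP hcb hcd)
  rcases eq_or_ne c b with rfl | hcb
  · obtain ⟨e, hea, hec⟩ := Cardinal.exists_ne_ne_of_three_le hA a c
    exact (dominance_subset_right hG hP hab hea.symm).trans (of_ne hea.symm hcd hec.symm)
  · exact of_ne hab hcd hcb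

theorem isTotalCone_dominance (hA : 3 ≤ Cardinal.mk A) (hG : PositiveAssociation G)
    (hP : WeakPareto G) (hab : a ≠ b) : IsTotalCone (dominance G a b) where
  add_mem α hα β hβ := by
    obtain ⟨c, hca, hcb⟩ := Cardinal.exists_ne_ne_of_three_le hA a b
    exact dominance_subset hA hG hP hca.symm hab <| add_mem_dominance hG hP hab hcb.symm hca.symm
      hα (dominance_subset hA hG hP hab hcb.symm hβ)
  mem_of_pos α hα := hP.mem_dominance_of_pos hab hα
  zero_notMem := hP.zero_notMem_dominance
  smul_one_sub_mem α hα δ hδ :=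
    dominance_subset hA hG hP hab.symm hab (hP.smul_one_sub_mem_dominance hab hα hδ)

variable [Fintype I] {k : I → ℝ}

/-- The weighted sum of the agents' values of an alternative. -/
def welfare (k : I → ℝ) (v : I → A → ℝ) (a : A) : ℝ := k ⬝ᵥ fun i => v i a

/-- The choice rules called affine maximizers in mechanism design, without additive constants. -/
def MaximizesWelfare (k : I → ℝ) (G : (I → A → ℝ) → A) : Prop :=
  ∀ v a, welfare k v a ≤ welfare k v (G v)

@[simp]
theorem welfare_zero (a : A) : welfare k 0 a = 0 := dotProduct_zero k

theorem welfare_update [DecidableEq I] (v : I → A → ℝ) (i : I) (s : A → ℝ) (a : A) :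
    welfare k (Function.update v i s) a = welfare k v a + k i * (s a - v i a) := by
  have hsplit : (fun j => Function.update v i s j a) = (v · a) + Pi.single i (s a - v i a) := by
    ext j
    rcases eq_or_ne j i with rfl | hj <;> simp [*]
  rw [welfare, hsplit, dotProduct_add, dotProduct_single, welfare]

theorem exists_maximizesWelfare (hA : 3 ≤ Cardinal.mk A) (hG : PositiveAssociation G)
    (hP : WeakPareto G) : ∃ k ∈ stdSimplex ℝ I, MaximizesWelfare k G := by
  have : Nontrivial A := Cardinal.one_lt_iff_nontrivial.1 (lt_of_lt_of_le (by norm_num) hA)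
  obtain ⟨a, b, hab⟩ := exists_pair_ne A
  obtain ⟨k, hk, hkdom⟩ := (isTotalCone_dominance hA hG hP hab).exists_weights
  refine ⟨k, hk, fun v c => ?_⟩
  rcases eq_or_ne c (G v) with rfl | hc
  · rfl
  refine le_of_forall_pos_le_add fun ε hε => ?_
  have hmem : (v · (G v)) - (v · c) + ε • (1 : I → ℝ) ∈ dominance G (G v) c :=
    ⟨v, rfl, fun i => by simpa using hε⟩
  have hnonneg := hkdom _ (dominance_subset hA hG hP hc.symm hab hmem)
  rw [dotProduct_add, dotProduct_sub, dotProduct_smul, dotProduct_one, hk.2, smul_eq_mul,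
    mul_one] at hnonneg
  simp only [welfare]
  linarith

end Roberts

section Types

variable [Fintype A] [Nonempty A] {u : Util A} {a b : A} {y z : ℝ}

theorem minVal_le (u : Util A) (a : A) : minVal u ≤ u a 0 :=
  Finset.inf'_le _ (Finset.mem_univ a)

theorem exists_eq_minVal (u : Util A) : ∃ c, u c 0 = minVal u := by
  obtain ⟨c, -, hc⟩ := Finset.exists_mem_eq_inf' Finset.univ_nonempty fun a => u a 0
  exact ⟨c, hc.symm⟩

theorem apply_wtp (h₁ : S1 u) (h₂ : S2 u) (a : A) : u a (wtp u a) = minVal u := by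
  obtain ⟨z, hz⟩ := h₂ a
  obtain ⟨y, hy⟩ := mem_range_of_exists_le_of_exists_ge (h₁ a).1 ⟨z, hz.le⟩ ⟨0, minVal_le u a⟩
  have hset : {z : ℝ | u a z ≤ minVal u} = Set.Ici y := by
    ext w
    rw [← hy]
    exact (h₁ a).2.le_iff_ge
  rw [wtp, hset, csInf_Ici, hy]

theorem minVal_le_apply_iff (h₁ : S1 u) (h₂ : S2 u) : minVal u ≤ u a z ↔ z ≤ wtp u a := by
  rw [← apply_wtp h₁ h₂ a]
  exact (h₁ a).2.le_iff_ge

theorem minVal_lt_apply_iff (h₁ : S1 u) (h₂ : S2 u) : minVal u < u a z ↔ z < wtp u a := by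
  rw [← apply_wtp h₁ h₂ a]
  exact (h₁ a).2.lt_iff_gt

theorem wtp_nonneg (h₁ : S1 u) (h₂ : S2 u) (a : A) : 0 ≤ wtp u a :=
  (minVal_le_apply_iff h₁ h₂).1 (minVal_le u a)

namespace IsParallel

theorem apply_eq_apply (hu : IsParallel u) (hy : 0 ≤ y) (hya : y ≤ wtp u a) (hz : 0 ≤ z)
    (hzb : z ≤ wtp u b) (h : wtp u a - y = wtp u b - z) : u a y = u b z := by
  rcases le_total (u b 0) (u a 0) with hv | hv
  · rw [← hu.2.2 a b hv z hz hzb]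
    congr 1
    linarith
  · rw [← hu.2.2 b a hv y hy hya]
    congr 1
    linarith

theorem apply_le_apply_iff (hu : IsParallel u) (hy : 0 ≤ y) (hya : y ≤ wtp u a) (hz : 0 ≤ z) :
    u b z ≤ u a y ↔ wtp u b - z ≤ wtp u a - y := by
  have anti_a := (hu.1 a).2
  have anti_b := (hu.1 b).2
  constructor
  · intro h
    by_contra! hlt
    have heq : u b (wtp u b - wtp u a + y) = u a y :=
      hu.apply_eq_apply (by linarith) (by linarith) hy hya (by ring)
    have hz_lt := anti_b (show z < wtp u b - wtp u a + y by linarith)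
    linarith
  · intro h
    rcases le_total z (wtp u b) with hzb | hbz
    · have heq : u b z = u a (wtp u a - wtp u b + z) :=
        hu.apply_eq_apply hz hzb (by linarith) (by linarith) (by ring)
      exact heq.trans_le (anti_a.antitone (by linarith))
    · calc u b z ≤ u b (wtp u b) := anti_b.antitone hbz
        _ = minVal u := apply_wtp hu.1 hu.2.1 b
        _ ≤ u a y := (minVal_le_apply_iff hu.1 hu.2.1).2 hya

end IsParallel

end Types

section Demand

variable {w : Util A} {D : (A → ℝ) → A}

/-- `D` selects an alternative that is optimal for type `w` at given prices. The prices are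
nonnegative with some price zero, so that buying is voluntary. -/
def IsDemandSelection (w : Util A) (D : (A → ℝ) → A) : Prop :=
  ∀ π : A → ℝ, (∀ a, 0 ≤ π a) → (∃ c, π c = 0) → ∀ b, w b (π b) ≤ w (D π) (π (D π))

/-- The law of demand, `(π - π') · (D π - D π') ≤ 0` with demands as unit vectors. -/
def LawOfDemand (D : (A → ℝ) → A) : Prop :=
  ∀ π π' : A → ℝ, π (D π) + π' (D π') ≤ π (D π') + π' (D π)

variable [Fintype A] [Nonempty A] {a b : A} {y z y' z' : ℝ}

/-- When the other alternatives are priced at their reservation values, only `a` and `b` can give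
more than the minimal utility. -/
theorem IsDemandSelection.eq_of_lt [DecidableEq A] (hD : IsDemandSelection w D) (h₁ : S1 w)
    (h₂ : S2 w) (hb0 : minVal w < w b 0) (hab : a ≠ b) (hy : 0 ≤ y) (hz : 0 ≤ z)
    (ha : minVal w < w a y) (hlt : w b z < w a y) :
    D (Function.update (Function.update (wtp w) b z) a y) = a := by
  set π := Function.update (Function.update (wtp w) b z) a y with hπ
  have hπa : π a = y := Function.update_self ..
  have hπb : π b = z := by simp [hπ, hab.symm]
  have hπd : ∀ d, d ≠ a → d ≠ b → π d = wtp w d := fun d hda hdb => by simp [hπ, hda, hdb]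
  have hnonneg : ∀ d, 0 ≤ π d := by
    intro d
    rcases eq_or_ne d a with rfl | hda
    · rwa [hπa]
    rcases eq_or_ne d b with rfl | hdb
    · rwa [hπb]
    · rw [hπd d hda hdb]
      exact wtp_nonneg h₁ h₂ d
  have hzero : ∃ c, π c = 0 := by
    obtain ⟨c, hc⟩ := exists_eq_minVal w
    have hca : c ≠ a := by
      rintro rfl
      exact ((ha.trans_le ((h₁ c).2.antitone hy)).ne' hc)
    have hcb : c ≠ b := by
      rintro rfl
      exact hb0.ne' hc
    exact ⟨c, (hπd c hca hcb).trans ((h₁ c).2.injective ((apply_wtp h₁ h₂ c).trans hc.symm))⟩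
  have hopt := hD π hnonneg hzero a
  rw [hπa] at hopt
  by_contra hne
  rcases eq_or_ne (D π) b with hDb | hDb
  · rw [hDb, hπb] at hopt
    exact hopt.not_gt hlt
  · rw [hπd _ hne hDb, apply_wtp h₁ h₂] at hopt
    exact hopt.not_gt ha

theorem LawOfDemand.sub_le_sub_of_lt (hLD : LawOfDemand D) (hD : IsDemandSelection w D)
    (h₁ : S1 w) (h₂ : S2 w) (hab : a ≠ b) (hy : 0 ≤ y) (hz : 0 ≤ z) (hy' : 0 ≤ y') (hz' : 0 ≤ z')
    (ha : minVal w < w a y) (hlt : w b z < w a y)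
    (hb : minVal w < w b z') (hlt' : w a y' < w b z') : y - z ≤ y' - z' := by
  classical
  have hDa := hD.eq_of_lt h₁ h₂ (hb.trans_le ((h₁ b).2.antitone hz')) hab hy hz ha hlt
  have hDb := hD.eq_of_lt h₁ h₂ (ha.trans_le ((h₁ a).2.antitone hy)) hab.symm hz' hy' hb hlt'
  have h := hLD (Function.update (Function.update (wtp w) b z) a y)
    (Function.update (Function.update (wtp w) a y') b z')
  rw [hDa, hDb] at h
  simp only [Function.update_self, Function.update_of_ne hab, Function.update_of_ne hab.symm] at h
  linarith

theorem exists_strict_preference (h₁ : S1 w) (ha0 : minVal w < w a 0) (hy : 0 ≤ y) (hz : 0 ≤ z)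
    (ha : minVal w ≤ w a y) (hle : w b z ≤ w a y) {ε : ℝ} (hε : 0 < ε) :
    ∃ y' z', 0 ≤ y' ∧ 0 ≤ z' ∧ minVal w < w a y' ∧ w b z' < w a y' ∧ y - z - ε ≤ y' - z' := by
  rcases hy.eq_or_lt with rfl | hy_pos
  · exact ⟨0, z + ε, le_rfl, by linarith, ha0, ((h₁ b).2 (by linarith)).trans_le hle,
      by linarith⟩
  · have hlt : w a y < w a (y - min ε y) := (h₁ a).2 (by linarith [lt_min hε hy_pos])
    exact ⟨y - min ε y, z, by linarith [min_le_right ε y], hz, ha.trans_lt hlt, hle.trans_lt hlt,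
      by linarith [min_le_left ε y]⟩

theorem LawOfDemand.sub_le_sub_of_le (hLD : LawOfDemand D) (hD : IsDemandSelection w D)
    (h₁ : S1 w) (h₂ : S2 w) (hab : a ≠ b) (ha0 : minVal w < w a 0) (hb0 : minVal w < w b 0)
    (hy : 0 ≤ y) (hz : 0 ≤ z) (hy' : 0 ≤ y') (hz' : 0 ≤ z')
    (ha : minVal w ≤ w a y) (hle : w b z ≤ w a y)
    (hb : minVal w ≤ w b z') (hle' : w a y' ≤ w b z') : y - z ≤ y' - z' := by
  refine le_of_forall_pos_le_add fun ε hε => ?_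
  obtain ⟨p, q, hp, hq, hap, hqp, hpq⟩ :=
    exists_strict_preference h₁ ha0 hy hz ha hle (half_pos hε)
  obtain ⟨q', p', hq', hp', hbq, hpq', hqp'⟩ :=
    exists_strict_preference h₁ hb0 hz' hy' hb hle' (half_pos hε)
  linarith [hLD.sub_le_sub_of_lt hD h₁ h₂ hab hp hq hp' hq' hap hqp hbq hpq']

theorem LawOfDemand.isParallel (hLD : LawOfDemand D) (hD : IsDemandSelection w D) (h₁ : S1 w)
    (h₂ : S2 w) : IsParallel w := by
  refine ⟨h₁, h₂, fun a b hba z hz hzb => ?_⟩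
  have hpa := apply_wtp h₁ h₂ a
  have hpb := apply_wtp h₁ h₂ b
  rcases eq_or_ne a b with rfl | hab
  · simp
  rcases hzb.eq_or_lt with rfl | hz_lt
  · rw [add_sub_cancel, hpa, hpb]
  have hbz : minVal w ≤ w b z := (minVal_le_apply_iff h₁ h₂).2 hzb
  have hb0 : minVal w < w b 0 := (minVal_lt_apply_iff h₁ h₂).2 (hz.trans_lt hz_lt)
  obtain ⟨y, ⟨hy, -⟩, hyz⟩ : ∃ y ∈ Set.Icc 0 (wtp w a), w a y = w b z :=
    intermediate_value_Icc' (wtp_nonneg h₁ h₂ a) (h₁ a).1.continuousOn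
      ⟨hpa.trans_le hbz, ((h₁ b).2.antitone hz).trans hba⟩
  have hwtp_a := wtp_nonneg h₁ h₂ a
  have hwtp_b := wtp_nonneg h₁ h₂ b
  -- Both `(y, z)` and the pair of willingnesses to pay leave `a` and `b` equally good.
  have hsub : y - z = wtp w a - wtp w b := le_antisymm
    (hLD.sub_le_sub_of_le hD h₁ h₂ hab (hb0.trans_le hba) hb0 hy hz hwtp_a hwtp_b
      (hbz.trans hyz.ge) hyz.ge hpb.ge (hpa.trans_le hpb.ge))
    (hLD.sub_le_sub_of_le hD h₁ h₂ hab (hb0.trans_le hba) hb0 hwtp_a hwtp_b hy hz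
      hpa.ge (hpb.trans_le hpa.ge) hbz hyz.le)
  rw [← hyz, ← hsub, add_sub_cancel]

end Demand

section Reports

variable {τ : I → (A → ℝ) → Util A}

/-- The type profile in which agent `i` has the type with values `v i`. -/
def valueProfile (τ : I → (A → ℝ) → Util A) (v : I → A → ℝ) : I → Util A := fun i => τ i (v i)

theorem valueProfile_update [DecidableEq I] (v : I → A → ℝ) (i : I) (s : A → ℝ) :
    valueProfile τ (Function.update v i s) = Function.update (valueProfile τ v) i (τ i s) :=
  funext <| Function.apply_update τ v i s

variable [Fintype A] [Nonempty A] {U : I → Set (Util A)} {i : I} {v : A → ℝ} {a b : A} {y z : ℝ}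

/-- A choice of parallel types in the domain, one for each vector of values; the willingness to
pay of the chosen type is the value vector shifted to have minimum zero. -/
structure IsParallelSection (U : I → Set (Util A)) (τ : I → (A → ℝ) → Util A) : Prop where
  mem : ∀ i v, τ i v ∈ U i
  isParallel : ∀ i v, IsParallel (τ i v)
  wtp_eq : ∀ i v a, wtp (τ i v) a = v a - Finset.univ.inf' Finset.univ_nonempty v

theorem exists_isParallelSection
    (h : ∀ i, ∃ D : Set (Util A), D ⊆ U i ∧ (∀ u ∈ D, IsParallel u) ∧ UnrestrictedWTP D) :
    ∃ τ, IsParallelSection U τ := by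
  have hexists : ∀ (i : I) (v : A → ℝ), ∃ u, u ∈ U i ∧ IsParallel u ∧
      ∀ a, wtp u a = v a - Finset.univ.inf' Finset.univ_nonempty v := by
    intro i v
    obtain ⟨D, hDU, hD, hw⟩ := h i
    obtain ⟨c, -, hc⟩ := Finset.exists_mem_eq_inf' Finset.univ_nonempty v
    obtain ⟨u, hu, hwu⟩ := hw (fun a => v a - Finset.univ.inf' Finset.univ_nonempty v)
      (fun a => sub_nonneg.2 (Finset.inf'_le _ (Finset.mem_univ a))) ⟨c, by rw [hc, sub_self]⟩
    exact ⟨u, hDU hu, hD u hu, hwu⟩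
  choose τ hmem hpar hwtp using hexists
  exact ⟨τ, hmem, hpar, hwtp⟩

namespace IsParallelSection

theorem wtp_single [Nontrivial A] [DecidableEq A] (hτ : IsParallelSection U τ) {M : ℝ}
    (hM : 0 ≤ M) : wtp (τ i (Pi.single a M)) = Pi.single a M := by
  obtain ⟨c, hc⟩ := exists_ne a
  have hnonneg : 0 ≤ (Pi.single a M : A → ℝ) := Pi.single_nonneg.2 hM
  have hinf : Finset.univ.inf' Finset.univ_nonempty (Pi.single a M : A → ℝ) = 0 :=
    le_antisymm ((Finset.inf'_le _ (Finset.mem_univ c)).trans_eq (by simp [hc]))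
      (Finset.le_inf' _ _ fun b _ => hnonneg b)
  ext b
  rw [hτ.wtp_eq, hinf, sub_zero]

theorem apply_le_apply_iff (hτ : IsParallelSection U τ) (hy : 0 ≤ y)
    (hya : y ≤ wtp (τ i v) a) (hz : 0 ≤ z) :
    τ i v b z ≤ τ i v a y ↔ v b - z ≤ v a - y := by
  rw [(hτ.isParallel i v).apply_le_apply_iff hy hya hz, hτ.wtp_eq, hτ.wtp_eq]
  constructor <;> intro h <;> linarith

theorem apply_lt_apply_iff (hτ : IsParallelSection U τ) (hy : 0 ≤ y)
    (hya : y ≤ wtp (τ i v) a) (hz : 0 ≤ z) :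
    τ i v a y < τ i v b z ↔ v a - y < v b - z := by
  rw [← not_le, hτ.apply_le_apply_iff hy hya hz, not_le]

theorem apply_eq_apply (hτ : IsParallelSection U τ) (hy : 0 ≤ y)
    (hya : y ≤ wtp (τ i v) a) (hz : 0 ≤ z) (h : v a - y = v b - z) : τ i v a y = τ i v b z := by
  have hwtp : wtp (τ i v) a - y = wtp (τ i v) b - z := by
    rw [hτ.wtp_eq, hτ.wtp_eq]
    linarith
  exact (hτ.isParallel i v).apply_eq_apply hy hya hz (by linarith) hwtp

theorem valueProfile_mem (hτ : IsParallelSection U τ) (v : I → A → ℝ) (j : I) :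
    valueProfile τ v j ∈ U j :=
  hτ.mem j (v j)

end IsParallelSection

end Reports

section Mechanisms

theorem update_mem_domain [DecidableEq I] {U : I → Set (Util A)} {u : I → Util A} {i : I}
    {w : Util A} (hu : ∀ j, u j ∈ U j) (hw : w ∈ U i) : ∀ j, Function.update u i w j ∈ U j :=
  (Function.forall_update_iff u fun j w => w ∈ U j).2 ⟨hw, fun j _ => hu j⟩

variable [Fintype A] [Nonempty A] [DecidableEq I] {U : I → Set (Util A)}
  {τ : I → (A → ℝ) → Util A} {x : (I → Util A) → A} {t : (I → Util A) → I → ℝ}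
  {u : I → Util A} {w : Util A} {i : I} {a : A} {M q : ℝ}

/-- The assumptions shared by the lemmas on a mechanism `(x, t)`: its domain consists of types with
(S1) and (S2), and it is DSIC, IR and without subsidies. -/
structure IsFeasible (U : I → Set (Util A)) (x : (I → Util A) → A)
    (t : (I → Util A) → I → ℝ) : Prop where
  regular : ∀ i, ∀ w ∈ U i, S1 w ∧ S2 w
  dsic : DSIC U x t
  ir : IR U x t
  noSubsidy : NoSubsidy U t

namespace IsFeasible

theorem payment_le_wtp (hm : IsFeasible U x t) (hu : ∀ j, u j ∈ U j) (i : I) :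
    t u i ≤ wtp (u i) (x u) := by
  have hir := hm.ir u hu i (u i) (hu i)
  rw [Function.update_eq_self] at hir
  exact (minVal_le_apply_iff (hm.regular i _ (hu i)).1 (hm.regular i _ (hu i)).2).1 hir

theorem payment_update_le_wtp (hm : IsFeasible U x t) (hu : ∀ j, u j ∈ U j) (hw : w ∈ U i) :
    t (Function.update u i w) i ≤ wtp w (x (Function.update u i w)) := by
  simpa using hm.payment_le_wtp (update_mem_domain hu hw) i

theorem value_sub_payment_le (hm : IsFeasible U x t) (hτ : IsParallelSection U τ)
    (hu : ∀ j, u j ∈ U j) (i : I) (v v' : A → ℝ) :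
    v (x (Function.update u i (τ i v'))) - t (Function.update u i (τ i v')) i ≤
      v (x (Function.update u i (τ i v))) - t (Function.update u i (τ i v)) i := by
  have hmem := update_mem_domain hu (hτ.mem i v)
  have hmem' := update_mem_domain hu (hτ.mem i v')
  have hdsic := hm.dsic _ hmem' i _ (hτ.mem i v)
  rw [Function.update_idem] at hdsic
  exact (hτ.apply_le_apply_iff (hm.noSubsidy _ hmem i)
    (hm.payment_update_le_wtp hu (hτ.mem i v)) (hm.noSubsidy _ hmem' i)).1 hdsic

theorem value_sub_le (hm : IsFeasible U x t) (hτ : IsParallelSection U τ)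
    (hu : ∀ j, u j ∈ U j) (i : I) (v v' : A → ℝ) :
    v' (x (Function.update u i (τ i v))) - v' (x (Function.update u i (τ i v'))) ≤
      v (x (Function.update u i (τ i v))) - v (x (Function.update u i (τ i v'))) := by
  linarith [hm.value_sub_payment_le hτ hu i v v', hm.value_sub_payment_le hτ hu i v' v]

theorem choice_update_single_eq [Nontrivial A] [DecidableEq A] (hm : IsFeasible U x t)
    (hτ : IsParallelSection U τ) (hu : ∀ j, u j ∈ U j) (hM : t u i < M) :
    x (Function.update u i (τ i (Pi.single (x u) M))) = x u := by
  set s := τ i (Pi.single (x u) M)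
  have hs : s ∈ U i := hτ.mem i _
  obtain ⟨h₁, h₂⟩ := hm.regular i s hs
  have hwtp : wtp s = Pi.single (x u) M :=
    hτ.wtp_single ((hm.noSubsidy u hu i).trans hM.le)
  have hgain : minVal s < s (x u) (t u i) :=
    (minVal_lt_apply_iff h₁ h₂).2 (by rwa [hwtp, Pi.single_eq_same])
  have hpay := (minVal_lt_apply_iff h₁ h₂).1 (hgain.trans_le (hm.dsic u hu i s hs))
  by_contra hne
  rw [hwtp, Pi.single_eq_of_ne hne] at hpay
  exact (hm.noSubsidy _ (update_mem_domain hu hs) i).not_gt hpay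

theorem apply_le_of_choice_update_single [Nontrivial A] [DecidableEq A] (hm : IsFeasible U x t)
    (hτ : IsParallelSection U τ) (hu : ∀ j, u j ∈ U j) (hM : 0 ≤ M)
    (h : x (Function.update u i (τ i (Pi.single a M))) = a) :
    u i a M ≤ u i (x u) (t u i) := by
  have hpay := hm.payment_update_le_wtp hu (hτ.mem i (Pi.single a M))
  have hdsic := hm.dsic _ (update_mem_domain hu (hτ.mem i (Pi.single a M))) i (u i) (hu i)
  rw [h, hτ.wtp_single hM, Pi.single_eq_same] at hpay
  rw [h, Function.update_idem, Function.update_eq_self] at hdsic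
  exact (((hm.regular i _ (hu i)).1 a).2.antitone hpay).trans hdsic

theorem apply_le_of_forall_gt [Nontrivial A] [DecidableEq A] (hm : IsFeasible U x t)
    (hτ : IsParallelSection U τ) (hu : ∀ j, u j ∈ U j) (hq : 0 ≤ q)
    (h : ∀ M, q < M → x (Function.update u i (τ i (Pi.single a M))) = a) :
    u i a q ≤ u i (x u) (t u i) := by
  have hcont : Continuous (u i a) := ((hm.regular i _ (hu i)).1 a).1
  refine le_of_tendsto (hcont.continuousWithinAt (s := Set.Ioi q)) ?_
  filter_upwards [self_mem_nhdsWithin] with M hM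
  exact hm.apply_le_of_choice_update_single hτ hu (hq.trans (le_of_lt hM)) (h M hM)

theorem positiveAssociation [Finite I] (hm : IsFeasible U x t) (hτ : IsParallelSection U τ) :
    PositiveAssociation fun v => x (valueProfile τ v) := by
  refine .of_update fun v i w hgain => ?_
  by_contra hne
  have hmono := hm.value_sub_le hτ (hτ.valueProfile_mem v) i (v i) w
  simp only [← valueProfile_update, Function.update_eq_self] at hmono
  exact hmono.not_gt (hgain _ hne)

theorem weakPareto [Fintype I] [Nonempty I] (hm : IsFeasible U x t) (hτ : IsParallelSection U τ)
    (hPE : ParetoEfficient U x t) : WeakPareto fun v => x (valueProfile τ v) := by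
  intro v b
  by_contra! hlt
  have hmem := hτ.valueProfile_mem v
  have hbetter : ∀ i, valueProfile τ v i (x (valueProfile τ v)) (t (valueProfile τ v) i) <
      valueProfile τ v i b (t (valueProfile τ v) i) := fun i =>
    (hτ.apply_lt_apply_iff (hm.noSubsidy _ hmem i) (hm.payment_le_wtp hmem i)
      (hm.noSubsidy _ hmem i)).2 (by linarith [hlt i])
  obtain ⟨i⟩ := ‹Nonempty I›
  have hb : b ≠ x (valueProfile τ v) := by
    rintro rfl
    exact (hlt i).false
  exact hPE _ hmem ⟨b, _, hb, fun i => (hbetter i).le, ⟨i, hbetter i⟩, le_rfl⟩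

theorem exists_maximizesWelfare [Fintype I] [Nonempty I] (hm : IsFeasible U x t)
    (hτ : IsParallelSection U τ) (hA : 3 ≤ Fintype.card A) (hPE : ParetoEfficient U x t) :
    ∃ k ∈ stdSimplex ℝ I, MaximizesWelfare k fun v => x (valueProfile τ v) :=
  NQLSC.exists_maximizesWelfare (by rw [Cardinal.mk_fintype]; exact_mod_cast hA)
    (hm.positiveAssociation hτ) (hm.weakPareto hτ hPE)

end IsFeasible

end Mechanisms

section Prices

variable [Fintype I] [DecidableEq I] {τ : I → (A → ℝ) → Util A} {x : (I → Util A) → A}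
  {k : I → ℝ} {v : I → A → ℝ} {i j : I} {π s : A → ℝ} {a : A}

/-- The prices that agent `i` faces when the others have values `v` and welfare has weights `k`:
an agent whose values are the prices makes the alternatives equally good. -/
def IsPriceSystem (k : I → ℝ) (v : I → A → ℝ) (i : I) (π : A → ℝ) : Prop :=
  ∀ a b, welfare k (Function.update v i π) a = welfare k (Function.update v i π) b

theorem isPriceSystem_update_zero (hj : k j ≠ 0) (hij : i ≠ j) (π : A → ℝ) :
    IsPriceSystem k (Function.update 0 j fun d => -(k i / k j) * π d) i π := by
  have hwelfare : ∀ a, welfare k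
      (Function.update (Function.update 0 j fun d => -(k i / k j) * π d) i π) a = 0 := by
    intro a
    rw [welfare_update, welfare_update, welfare_zero, Function.update_of_ne hij]
    simp only [Pi.zero_apply]
    field_simp
    ring
  intro a b
  rw [hwelfare, hwelfare]

theorem isPriceSystem_of_weight_eq_zero [DecidableEq A] {i i' : I} (hj : k j = 0) (hij : i ≠ j)
    (hi'j : i' ≠ j) (hii' : i ≠ i') (s : A → ℝ) (c : A) :
    IsPriceSystem k
      (Function.update (Function.update 0 j s) i' (Pi.single c (k i) : A → ℝ)) i
      (Function.const A (k i') - Pi.single c (k i')) := by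
  have hwelfare : ∀ a, welfare k (Function.update
      (Function.update (Function.update 0 j s) i' (Pi.single c (k i) : A → ℝ)) i
      (Function.const A (k i') - Pi.single c (k i'))) a = k i * k i' := by
    intro a
    rcases eq_or_ne a c with rfl | ha <;> simp [welfare_update, *, mul_comm]
  intro a b
  rw [hwelfare, hwelfare]

theorem IsPriceSystem.sub_le_sub (hπ : IsPriceSystem k v i π)
    (hk : MaximizesWelfare k fun v => x (valueProfile τ v)) (hi : 0 < k i) (s : A → ℝ) (b : A) :
    s b - π b ≤ s (x (Function.update (valueProfile τ v) i (τ i s))) -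
      π (x (Function.update (valueProfile τ v) i (τ i s))) := by
  have hsplit : ∀ a, welfare k (Function.update v i s) a =
      welfare k (Function.update v i π) a + k i * (s a - π a) := fun a => by
    rw [welfare_update, welfare_update]
    ring
  have hmax := hk (Function.update v i s) b
  rw [hsplit, hsplit, hπ b, add_le_add_iff_left, mul_le_mul_iff_right₀ hi] at hmax
  simpa only [valueProfile_update] using hmax

theorem IsPriceSystem.choice_eq (hπ : IsPriceSystem k v i π)
    (hk : MaximizesWelfare k fun v => x (valueProfile τ v)) (hi : 0 < k i)
    (h : ∀ d, d ≠ a → s d - π d < s a - π a) :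
    x (Function.update (valueProfile τ v) i (τ i s)) = a := by
  by_contra hne
  exact (hπ.sub_le_sub hk hi s a).not_gt (h _ hne)

variable [Fintype A] [Nonempty A] [Nontrivial A] {U : I → Set (Util A)}
  {t : (I → Util A) → I → ℝ} {w : Util A}

namespace IsFeasible

theorem apply_price_le (hm : IsFeasible U x t) (hτ : IsParallelSection U τ)
    (hk : MaximizesWelfare k fun v => x (valueProfile τ v)) (hi : 0 < k i)
    (hπ : IsPriceSystem k v i π) (hπ0 : ∀ a, 0 ≤ π a) (hw : w ∈ U i) (b : A) :
    w b (π b) ≤ w (x (Function.update (valueProfile τ v) i w))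
      (t (Function.update (valueProfile τ v) i w) i) := by
  classical
  have hbuy : ∀ M, π b < M →
      x (Function.update (valueProfile τ v) i (τ i (Pi.single b M))) = b := by
    refine fun M hM => hπ.choice_eq hk hi fun d hd => ?_
    rw [Pi.single_eq_same, Pi.single_eq_of_ne hd]
    linarith [hπ0 d]
  have h := hm.apply_le_of_forall_gt hτ (u := Function.update (valueProfile τ v) i w) (i := i)
    (update_mem_domain (hτ.valueProfile_mem v) hw) (hπ0 b) (by simpa using hbuy)
  rwa [Function.update_self] at h

theorem price_le_payment (hm : IsFeasible U x t) (hτ : IsParallelSection U τ)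
    (hk : MaximizesWelfare k fun v => x (valueProfile τ v)) (hi : 0 < k i)
    (hπ : IsPriceSystem k v i π) (hzero : ∃ c, π c = 0) (hw : w ∈ U i) :
    π (x (Function.update (valueProfile τ v) i w)) ≤
      t (Function.update (valueProfile τ v) i w) i := by
  classical
  set u := Function.update (valueProfile τ v) i w
  have hu : ∀ j, u j ∈ U j := update_mem_domain (hτ.valueProfile_mem v) hw
  by_contra! hlt
  obtain ⟨M, htM, hMπ⟩ := exists_between hlt
  obtain ⟨c, hc⟩ := hzero
  have hM : 0 ≤ M := (hm.noSubsidy u hu i).trans htM.le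
  have hchoice := hm.choice_update_single_eq hτ hu htM
  rw [Function.update_idem] at hchoice
  have hmax := hπ.sub_le_sub hk hi (Pi.single (x u) M) c
  rw [hchoice, Pi.single_eq_same, hc] at hmax
  have hnonneg : 0 ≤ (Pi.single (x u) M : A → ℝ) c :=
    (Pi.single_nonneg (α := fun _ : A => ℝ)).2 hM c
  linarith

theorem isDemandSelection (hm : IsFeasible U x t) (hτ : IsParallelSection U τ)
    (hk : MaximizesWelfare k fun v => x (valueProfile τ v)) (hi : 0 < k i) (hw : w ∈ U i)
    {V : (A → ℝ) → I → A → ℝ} (hV : ∀ π, IsPriceSystem k (V π) i π) :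
    IsDemandSelection w fun π => x (Function.update (valueProfile τ (V π)) i w) :=
  fun π hπ0 hzero b => (hm.apply_price_le hτ hk hi (hV π) hπ0 hw b).trans <|
    ((hm.regular i w hw).1 _).2.antitone (hm.price_le_payment hτ hk hi (hV π) hzero hw)

/-- An agent `j` of positive weight can confront `i` with arbitrary prices `π` by reporting values
proportional to `-π`, and the mechanism is monotone in these reports. -/
theorem isParallel_of_weights_pos (hm : IsFeasible U x t) (hτ : IsParallelSection U τ)
    (hk : MaximizesWelfare k fun v => x (valueProfile τ v)) (hij : i ≠ j) (hi : 0 < k i)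
    (hj : 0 < k j) (hw : w ∈ U i) : IsParallel w := by
  set V : (A → ℝ) → I → A → ℝ := fun π => Function.update 0 j fun d => -(k i / k j) * π d with hV
  have hdemand := hm.isDemandSelection hτ hk hi hw (isPriceSystem_update_zero hj.ne' hij)
  refine LawOfDemand.isParallel (fun π π' => ?_) hdemand (hm.regular i w hw).1
    (hm.regular i w hw).2
  have hswap : ∀ π, Function.update (valueProfile τ (V π)) i w = Function.update
      (Function.update (valueProfile τ 0) i w) j (τ j fun d => -(k i / k j) * π d) := fun π => by
    rw [hV, valueProfile_update, Function.update_comm hij.symm]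
  have hmono := hm.value_sub_le hτ (update_mem_domain (hτ.valueProfile_mem 0) hw) j
    (fun d => -(k i / k j) * π d) fun d => -(k i / k j) * π' d
  rw [← hswap, ← hswap] at hmono
  exact le_of_mul_le_mul_left (by linarith) (div_pos hi hj)

end IsFeasible

end Prices

section Weights

theorem ParetoEfficient.not_forall_le_of_transfer [Fintype I] {U : I → Set (Util A)}
    {x : (I → Util A) → A} {t : (I → Util A) → I → ℝ} {u : I → Util A} {i j : I} {b : A} {q : ℝ}
    (hPE : ParetoEfficient U x t) (hu : ∀ l, u l ∈ U l) (hb : b ≠ x u) (hij : i ≠ j)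
    (hi : u i (x u) (t u i) ≤ u i b (t u i - q)) (hj : u j (x u) (t u j) < u j b (t u j + q)) :
    ¬ ∀ l, l ≠ i → l ≠ j → u l (x u) (t u l) ≤ u l b (t u l) := by
  classical
  intro hl
  set s : I → ℝ := t u + Pi.single j q - Pi.single i q
  have hsi : s i = t u i - q := by simp [s, hij]
  have hsj : s j = t u j + q := by simp [s, hij.symm]
  refine hPE u hu ⟨b, s, hb, fun l => ?_, ⟨j, hsj ▸ hj⟩, ?_⟩
  · rcases eq_or_ne l i with rfl | hli
    · rwa [hsi]
    rcases eq_or_ne l j with rfl | hlj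
    · rw [hsj]
      exact hj.le
    · simpa [s, hli, hlj] using hl l hli hlj
  · simp [s, Finset.sum_add_distrib, Finset.sum_sub_distrib]

variable [Fintype A] [Nonempty A] [Fintype I] [DecidableEq I] {U : I → Set (Util A)}
  {τ : I → (A → ℝ) → Util A} {x : (I → Util A) → A} {t : (I → Util A) → I → ℝ} {k : I → ℝ}
  {v : I → A → ℝ} {i j : I} {a b : A} {q : ℝ}

theorem IsFeasible.not_forall_eq_of_transfer (hm : IsFeasible U x t) (hτ : IsParallelSection U τ)
    (hPE : ParetoEfficient U x t) (ha : x (valueProfile τ v) = a) (hba : b ≠ a) (hij : i ≠ j)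
    (hq : 0 ≤ q) (hpay : q ≤ t (valueProfile τ v) i) (hi : v i a - v i b = q)
    (hj : v j a < v j b - q) : ¬ ∀ l, l ≠ i → l ≠ j → v l a = v l b := by
  subst ha
  intro hl
  have hmem := hτ.valueProfile_mem v
  have ht := hm.noSubsidy _ hmem
  have hwtp := hm.payment_le_wtp hmem
  refine hPE.not_forall_le_of_transfer (q := q) hmem hba hij ?_ ?_ fun l hli hlj => ?_
  · exact (hτ.apply_eq_apply (ht i) (hwtp i) (by linarith) (by linarith)).le
  · exact (hτ.apply_lt_apply_iff (ht j) (hwtp j) (by linarith [ht j])).2 (by linarith)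
  · exact (hτ.apply_eq_apply (ht l) (hwtp l) (ht l) (by rw [hl l hli hlj])).le

/-- With `q = k i'`, let `i` value `a` at `2q` and `b` at `q`, and `i'` value `c` at `k i`. Then
`i` obtains `a` at price `q`, but an agent `j` without weight who values `b` at `2q` would gladly
pay these `q` back to `i` for replacing `a` by `b`. -/
theorem IsFeasible.weight_ne_zero (hm : IsFeasible U x t) (hτ : IsParallelSection U τ)
    (hA : 3 ≤ Fintype.card A) (hPE : ParetoEfficient U x t)
    (hk : MaximizesWelfare k fun v => x (valueProfile τ v)) {i i' : I} (hii' : i ≠ i')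
    (hi : 0 < k i) (hi' : 0 < k i') (j : I) : k j ≠ 0 := by
  classical
  intro hj
  have hij : i ≠ j := fun h => hi.ne' (h ▸ hj)
  have hi'j : i' ≠ j := fun h => hi'.ne' (h ▸ hj)
  obtain ⟨a, b, c, hab, hac, hbc⟩ := Fintype.two_lt_card_iff.1 hA
  have : Nontrivial A := ⟨a, b, hab⟩
  set q := k i'
  set s : A → ℝ := Pi.single a (2 * q) + Pi.single b q
  set v₀ : I → A → ℝ :=
    Function.update (Function.update 0 j (Pi.single b (2 * q))) i' (Pi.single c (k i))
  set v := Function.update v₀ i s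
  have hv : valueProfile τ v = Function.update (valueProfile τ v₀) i (τ i s) :=
    valueProfile_update ..
  have hπ : IsPriceSystem k v₀ i (Function.const A q - Pi.single c q) :=
    isPriceSystem_of_weight_eq_zero hj hij hi'j hii' _ c
  have hchoice : x (valueProfile τ v) = a := by
    rw [hv]
    refine hπ.choice_eq hk hi fun d hda => ?_
    rcases eq_or_ne d b with rfl | hdb <;> rcases eq_or_ne d c with rfl | hdc <;>
      simp_all [s, q]
  have hpay : q ≤ t (valueProfile τ v) i := by
    have h := hm.price_le_payment hτ hk hi hπ ⟨c, by simp⟩ (hτ.mem i s)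
    rw [← hv, hchoice] at h
    simpa [hac] using h
  refine hm.not_forall_eq_of_transfer hτ hPE hchoice hab.symm hij hi'.le hpay ?_ ?_ ?_
  · simp [v, s, hab, hab.symm]
    ring
  · simp [v, v₀, hij.symm, hi'j.symm, hab]
    linarith
  · intro l hli hlj
    rcases eq_or_ne l i' with rfl | hli' <;> simp [v, v₀, *]

end Weights

section Dictators

variable [Fintype A] [Nonempty A] [DecidableEq I] {U : I → Set (Util A)}
  {τ : I → (A → ℝ) → Util A} {x : (I → Util A) → A} {t : (I → Util A) → I → ℝ} {k : I → ℝ}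
  {u : I → Util A} {i : I}

/-- An agent who, at every profile, obtains a most preferred alternative and pays nothing. -/
def IsDictator (U : I → Set (Util A)) (x : (I → Util A) → A) (t : (I → Util A) → I → ℝ)
    (i : I) : Prop :=
  ∀ u : I → Util A, (∀ j, u j ∈ U j) → (∀ a, u i a 0 ≤ u i (x u) 0) ∧ t u i = 0

namespace IsFeasible

variable [Nontrivial A]

theorem isDictator_of_forall_single [DecidableEq A] (hm : IsFeasible U x t)
    (hτ : IsParallelSection U τ)
    (h : ∀ u, (∀ j, u j ∈ U j) → ∀ a M, 0 < M →
      x (Function.update u i (τ i (Pi.single a M))) = a) : IsDictator U x t i := by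
  intro u hu
  have hbest : ∀ a, u i a 0 ≤ u i (x u) (t u i) := fun a =>
    hm.apply_le_of_forall_gt hτ hu le_rfl (h u hu a)
  have anti := ((hm.regular i _ (hu i)).1 (x u)).2
  have ht : t u i = 0 := (anti.le_iff_ge.1 (hbest (x u))).antisymm (hm.noSubsidy u hu i)
  exact ⟨fun a => ht ▸ hbest a, ht⟩

theorem exists_choice_piecewise_eq (hm : IsFeasible U x t) (hτ : IsParallelSection U τ)
    (hu : ∀ j, u j ∈ U j) (s : Finset I) :
    ∃ v, x (s.piecewise (valueProfile τ v) u) = x u := by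
  classical
  induction s using Finset.induction_on with
  | empty => exact ⟨0, by simp⟩
  | insert j s _ ih =>
    obtain ⟨v, hv⟩ := ih
    set u' := s.piecewise (valueProfile τ v) u with hu'
    have hmem : ∀ l, u' l ∈ U l := fun l =>
      s.piecewise_cases _ u (· ∈ U l) (hτ.valueProfile_mem v l) (hu l)
    refine ⟨Function.update v j (Pi.single (x u') (t u' j + 1)), ?_⟩
    rw [Finset.piecewise_insert, valueProfile_update, Function.update_self,
      Finset.update_piecewise, Function.update_idem, ← Finset.update_piecewise, ← hu', ← hv]
    exact hm.choice_update_single_eq hτ hmem (lt_add_one _)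

theorem isDictator_of_weight [Fintype I] (hm : IsFeasible U x t) (hτ : IsParallelSection U τ)
    (hk : MaximizesWelfare k fun v => x (valueProfile τ v)) (hi : 0 < k i)
    (hzero : ∀ j, j ≠ i → k j = 0) : IsDictator U x t i := by
  classical
  refine hm.isDictator_of_forall_single hτ fun u hu a M hM => ?_
  obtain ⟨v, hv⟩ := hm.exists_choice_piecewise_eq hτ
    (update_mem_domain hu (hτ.mem i (Pi.single a M))) {i}ᶜ
  rw [Finset.piecewise_compl, Finset.piecewise_singleton, Function.update_self,
    ← valueProfile_update] at hv
  have hwelfare : ∀ b, welfare k (Function.update v i (Pi.single a M)) b =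
      k i * (Pi.single a M : A → ℝ) b := fun b => by
    rw [welfare, dotProduct, Fintype.sum_eq_single i fun j hj => by rw [hzero j hj, zero_mul],
      Function.update_self]
  have hmax := hk (Function.update v i (Pi.single a M)) a
  simp only [hwelfare, hv] at hmax
  by_contra hne
  rw [Pi.single_eq_same, Pi.single_eq_of_ne hne, mul_zero] at hmax
  exact hmax.not_gt (mul_pos hi hM)

end IsFeasible

end Dictators

/-- Dictatorship under Pareto efficiency. With `|A| ≥ 3`, (C1), and
some agent having a non-parallel type (C2'), every DSIC, deterministic, IR, no-subsidy,
Pareto-efficient mechanism is a dictatorship: the dictator gets a most preferred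
alternative at zero payment and pays nothing. -/
theorem dictatorship_pareto
    [Fintype A] [Nonempty A] [Fintype I] [DecidableEq I]
    (hA : 3 ≤ Fintype.card A)
    (U : I → Set (Util A))
    (hS : ∀ i, ∀ u ∈ U i, S1 u ∧ S2 u)
    (hC1 : ∀ i, ∃ D : Set (Util A), D ⊆ U i ∧ (∀ u ∈ D, IsParallel u) ∧ UnrestrictedWTP D)
    (hC2' : ∃ i, ∃ u ∈ U i, ¬ IsParallel u)
    (x : (I → Util A) → A) (t : (I → Util A) → I → ℝ)
    (hDSIC : DSIC U x t) (hIR : IR U x t) (hNS : NoSubsidy U t)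
    (hPE : ParetoEfficient U x t) :
    ∃ istar : I, ∀ u : I → Util A, (∀ j, u j ∈ U j) →
      (∀ a : A, u istar a 0 ≤ u istar (x u) 0) ∧ t u istar = 0 := by
  have hm : IsFeasible U x t := ⟨hS, hDSIC, hIR, hNS⟩
  obtain ⟨n, w, hw, hnp⟩ := hC2'
  have : Nonempty I := ⟨n⟩
  have : Nontrivial A := Fintype.one_lt_card_iff_nontrivial.1 (by omega)
  obtain ⟨τ, hτ⟩ := exists_isParallelSection hC1
  obtain ⟨k, ⟨hk0, hk1⟩, hk⟩ := hm.exists_maximizesWelfare hτ hA hPE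
  obtain ⟨i, -, hi⟩ := (Finset.sum_pos_iff_of_nonneg fun i _ => hk0 i).1 (hk1 ▸ zero_lt_one)
  by_cases hzero : ∀ j, j ≠ i → k j = 0
  · exact ⟨i, hm.isDictator_of_weight hτ hk hi hzero⟩
  push Not at hzero
  obtain ⟨j, hji, hj⟩ := hzero
  have hpos : ∀ l, 0 < k l := fun l => (hk0 l).lt_of_ne' <|
    hm.weight_ne_zero hτ hA hPE hk hji.symm hi ((hk0 j).lt_of_ne' hj) l
  have : Nontrivial I := ⟨j, i, hji⟩
  obtain ⟨l, hl⟩ := exists_ne n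
  exact absurd (hm.isParallel_of_weights_pos hτ hk hl.symm (hpos n) (hpos l) hw) hnp

end NQLSC
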